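/- Let a, b, c be real numbers with a − 2b − 4c ≠ 0. For every real x > 0, the normalized function g_{1/2}(x) = 2^{1/2} Γ(3/2) x^{1/2} N_{1/2}(x) / Q(1/2) satisfies g_{1/2}(x) = [4(a−b) x cos x + (4a x² − 3a + 2b − 4c) sin x] / (a − 2b − 4c). -/

import Mathlib

open Real

/-- The Bessel function of the first kind of order `ν`, defined by its power series
(as a function of a real variable). -/
noncomputable def besselJ (ν : ℝ) (x : ℝ) : ℝ :=
  ∑' n : ℕ, ((-1 : ℝ) ^ n / (n.factorial * Real.Gamma (n + ν + 1))) * (x / 2) ^ (2 * (n : ℝ) + ν)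

/-- `N_ν(x) = a x² J_ν''(x) + b x J_ν'(x) + c J_ν(x)`. -/
noncomputable def besselN (a b c ν : ℝ) (x : ℝ) : ℝ :=
  a * x ^ 2 * deriv (deriv (besselJ ν)) x + b * x * deriv (besselJ ν) x + c * besselJ ν x

/-- `Q(t) = a t (t − 1) + b t + c`. -/
def Qpoly (a b c : ℝ) (t : ℝ) : ℝ := a * t * (t - 1) + b * t + c

/-!
Legendre's duplication formula turns the power series of `J_{1/2}` into that of the sine, so
`J_{1/2}(x) = √(2/π) x^{-1/2} sin x` for `x > 0`. Conjugating the Euler operator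
`L f = a x² f'' + b x f' + c f` by a power gives
`x^{-s} L(x^s u) = a x² u'' + (2as + b) x u' + Q(s) u`, and `s = -1/2`, `u = sin` yields
`N_{1/2} = L J_{1/2}`. The normalizing factor cancels because `√2 Γ(3/2) √(2/π) = 1`.
-/

open Topology

theorem deriv_deriv_fun_mul {𝕜 𝔸 : Type*} [NontriviallyNormedField 𝕜] [NormedRing 𝔸]
    [NormedAlgebra 𝕜 𝔸] {f g : 𝕜 → 𝔸} {x : 𝕜} (hf : ContDiffAt 𝕜 2 f x)
    (hg : ContDiffAt 𝕜 2 g x) :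
    deriv (deriv fun y ↦ f y * g y) x =
      deriv (deriv f) x * g x + 2 * (deriv f x * deriv g x) + f x * deriv (deriv g) x := by
  have leibniz := iteratedDeriv_fun_mul (n := 2) hf hg
  simp only [Finset.sum_range_succ, Finset.sum_range_zero, iteratedDeriv_succ, iteratedDeriv_zero,
    Nat.choose_zero_right, Nat.choose_one_right, Nat.choose_self, Nat.sub_zero, Nat.add_one_sub_one,
    Nat.sub_self, Nat.reduceAdd, Nat.cast_one, Nat.cast_ofNat, zero_add, one_mul,
    mul_assoc] at leibniz
  rw [leibniz]
  abel

section EulerOperator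

/-- The Cauchy–Euler differential operator `a x² d²/dx² + b x d/dx + c`, whose indicial polynomial
is `Qpoly a b c`. It is applied to an arbitrary `f`, with `deriv` read as `0` where `f` is not
differentiable; `besselN a b c ν` is its value on `besselJ ν`. -/
noncomputable def eulerOp (a b c : ℝ) (f : ℝ → ℝ) (x : ℝ) : ℝ :=
  a * x ^ 2 * deriv (deriv f) x + b * x * deriv f x + c * f x

variable (a b c : ℝ) {f g : ℝ → ℝ} {x : ℝ}

theorem eulerOp_congr (h : f =ᶠ[𝓝 x] g) : eulerOp a b c f x = eulerOp a b c g x := by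
  rw [eulerOp, eulerOp, h.deriv.deriv_eq, h.deriv_eq, h.eq_of_nhds]

theorem eulerOp_const_mul (k : ℝ) (f : ℝ → ℝ) (x : ℝ) :
    eulerOp a b c (fun y ↦ k * f y) x = k * eulerOp a b c f x := by
  simp only [eulerOp, deriv_const_mul_field']
  ring

theorem eulerOp_sin (x : ℝ) :
    eulerOp a b c sin x = b * x * cos x + (c - a * x ^ 2) * sin x := by
  simp only [eulerOp, Real.deriv_sin, Real.deriv_cos']
  ring

theorem eulerOp_rpow_mul (s : ℝ) (hx : x ≠ 0) (hf : ContDiffAt ℝ 2 f x) :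
    eulerOp a b c (fun y ↦ y ^ s * f y) x =
      x ^ s * eulerOp a (2 * a * s + b) (Qpoly a b c s) f x := by
  have rpow_smooth : ContDiffAt ℝ 2 (fun y : ℝ ↦ y ^ s) x := contDiffAt_rpow_const_of_ne hx
  have deriv_rpow : deriv (fun y : ℝ ↦ y ^ s) x = s * x ^ s / x := by
    rw [Real.deriv_rpow_const, rpow_sub_one hx, mul_div_assoc]
  have deriv_deriv_rpow : deriv (deriv fun y : ℝ ↦ y ^ s) x = s * (s - 1) * x ^ s / x ^ 2 := by
    rw [Real.deriv_rpow_const', deriv_const_mul_field, Real.deriv_rpow_const, rpow_sub_one hx,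
      rpow_sub_one hx]
    field_simp
  have deriv_mul : deriv (fun y ↦ y ^ s * f y) x = s * x ^ s / x * f x + x ^ s * deriv f x := by
    rw [deriv_fun_mul (rpow_smooth.differentiableAt two_ne_zero)
      (hf.differentiableAt two_ne_zero), deriv_rpow]
  rw [eulerOp, deriv_deriv_fun_mul rpow_smooth hf, deriv_mul, deriv_deriv_rpow, deriv_rpow, eulerOp,
    Qpoly]
  field_simp
  ring

end EulerOperator

theorem factorial_mul_Gamma_add_half_add_one (n : ℕ) :
    n.factorial * Gamma (n + 1 / 2 + 1) = (2 * n + 1).factorial * √π / 2 ^ (2 * n + 1) := by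
  have duplication := Gamma_mul_Gamma_add_half (n + 1)
  have double : (2 : ℝ) * (n + 1) = (2 * n + 1 : ℕ) + 1 := by push_cast; ring
  have exponent : 1 - ((2 * n + 1 : ℕ) + 1 : ℝ) = -(2 * n + 1 : ℕ) := by ring
  rw [double, Gamma_nat_eq_factorial, Gamma_nat_eq_factorial, exponent,
    rpow_neg zero_le_two, rpow_natCast, add_right_comm] at duplication
  rw [duplication]
  ring

theorem div_two_rpow_two_mul_add_half {x : ℝ} (hx : 0 < x) (n : ℕ) :
    (x / 2) ^ (2 * (n : ℝ) + 1 / 2) =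
      √2 * x ^ (-(1 / 2) : ℝ) * (x ^ (2 * n + 1) / 2 ^ (2 * n + 1)) := by
  have half_rpow : (x / 2) ^ (-(1 / 2) : ℝ) = √2 * x ^ (-(1 / 2) : ℝ) := by
    rw [div_rpow hx.le zero_le_two, rpow_neg zero_le_two, ← sqrt_eq_rpow, div_inv_eq_mul, mul_comm]
  have exponent : 2 * (n : ℝ) + 1 / 2 = -(1 / 2) + (2 * n + 1 : ℕ) := by push_cast; ring
  rw [exponent, rpow_add_natCast (by positivity), half_rpow, div_pow]

theorem besselJ_half_term {x : ℝ} (hx : 0 < x) (n : ℕ) :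
    (-1 : ℝ) ^ n / (n.factorial * Gamma (n + 1 / 2 + 1)) * (x / 2) ^ (2 * (n : ℝ) + 1 / 2) =
      √(2 / π) * x ^ (-(1 / 2) : ℝ) * ((-1) ^ n * x ^ (2 * n + 1) / (2 * n + 1).factorial) := by
  rw [factorial_mul_Gamma_add_half_add_one, div_two_rpow_two_mul_add_half hx, sqrt_div zero_le_two]
  field_simp

theorem besselJ_half {x : ℝ} (hx : 0 < x) :
    besselJ (1 / 2) x = √(2 / π) * (x ^ (-(1 / 2) : ℝ) * sin x) := by
  rw [besselJ, tsum_congr (besselJ_half_term hx), tsum_mul_left, (hasSum_sin x).tsum_eq, mul_assoc]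

theorem Gamma_three_halves : Gamma (3 / 2) = √π / 2 := by
  rw [show (3 / 2 : ℝ) = 1 / 2 + 1 by norm_num, Gamma_add_one (by norm_num), Gamma_one_half_eq]
  ring

theorem sqrt_two_mul_Gamma_three_halves_mul_sqrt_two_div_pi :
    √2 * Gamma (3 / 2) * √(2 / π) = 1 := by
  rw [Gamma_three_halves, sqrt_div zero_le_two]
  field_simp
  norm_num

theorem besselN_eq_eulerOp (a b c ν x : ℝ) :
    besselN a b c ν x = eulerOp a b c (besselJ ν) x :=
  rfl

theorem besselN_half (a b c : ℝ) {x : ℝ} (hx : 0 < x) :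
    besselN a b c (1 / 2) x = √(2 / π) * (x ^ (-(1 / 2) : ℝ) *
      ((b - a) * x * cos x + (Qpoly a b c (-(1 / 2)) - a * x ^ 2) * sin x)) := by
  have besselJ_eventuallyEq :
      besselJ (1 / 2) =ᶠ[𝓝 x] fun y ↦ √(2 / π) * (y ^ (-(1 / 2) : ℝ) * sin y) := by
    filter_upwards [lt_mem_nhds hx] with y hy using besselJ_half hy
  rw [besselN_eq_eulerOp, eulerOp_congr a b c besselJ_eventuallyEq, eulerOp_const_mul,
    eulerOp_rpow_mul a b c _ hx.ne' contDiff_sin.contDiffAt, eulerOp_sin]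
  ring

theorem normalized_besselN_half (a b c : ℝ) {x : ℝ} (hx : 0 < x) :
    2 ^ (1 / 2 : ℝ) * Gamma (3 / 2) * x ^ (1 / 2 : ℝ) * besselN a b c (1 / 2) x =
      (b - a) * x * cos x + (Qpoly a b c (-(1 / 2)) - a * x ^ 2) * sin x := by
  have rpow_cancel : x ^ (1 / 2 : ℝ) * x ^ (-(1 / 2) : ℝ) = 1 := by
    rw [← rpow_add hx, add_neg_cancel, rpow_zero]
  rw [besselN_half a b c hx, ← sqrt_eq_rpow 2]
  set value := (b - a) * x * cos x + (Qpoly a b c (-(1 / 2)) - a * x ^ 2) * sin x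
  calc √2 * Gamma (3 / 2) * x ^ (1 / 2 : ℝ) * (√(2 / π) * (x ^ (-(1 / 2) : ℝ) * value))
      = √2 * Gamma (3 / 2) * √(2 / π) * (x ^ (1 / 2 : ℝ) * x ^ (-(1 / 2) : ℝ)) * value := by ring
    _ = value := by
      rw [sqrt_two_mul_Gamma_three_halves_mul_sqrt_two_div_pi, rpow_cancel, one_mul, one_mul]

theorem stmt_3 (a b c : ℝ) (h : a - 2 * b - 4 * c ≠ 0) (x : ℝ) (hx : 0 < x) :
    (2 : ℝ) ^ ((1 : ℝ) / 2) * Real.Gamma (3 / 2) * x ^ ((1 : ℝ) / 2) *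
        besselN a b c (1/2) x / Qpoly a b c (1/2) =
      (4 * (a - b) * x * Real.cos x + (4 * a * x ^ 2 - 3 * a + 2 * b - 4 * c) * Real.sin x) /
        (a - 2 * b - 4 * c) := by
  have Q_half : Qpoly a b c (1 / 2) = -(a - 2 * b - 4 * c) / 4 := by rw [Qpoly]; ring
  have Q_neg_half : Qpoly a b c (-(1 / 2)) = (3 * a - 2 * b + 4 * c) / 4 := by rw [Qpoly]; ring
  rw [normalized_besselN_half a b c hx, Q_half, Q_neg_half]
  field_simp
  ring
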